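/- arXiv:2405.12577 — 2 statements merged into one kernel-verified Lean document; each statement's English description precedes it below -/
import Mathlib

section
/- Let m, N be positive integers, let B be a real 3×m matrix of rank 3 and Q a real 3×N matrix of rank 3. Then the (Nm)×5 real block matrix H = [ −2 (Qᵀ ⊗ Bᵀ) T , −2 (1_N ⊗ Bᵀ) ] has full column rank 5; equivalently, for all x ∈ ℝ² and t ∈ ℝ³, (Qᵀ ⊗ Bᵀ)(T x) + (1_N ⊗ Bᵀ) t = 0 implies x = 0 and t = 0. -/
/-!
Writing `a = x 0`, `b = x 1`, the vector `Tmat *ᵥ x` is the column-major vectorization of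
`X = [[b, -a, 0], [a, b, 0], [0, 0, 0]]`, so the equation says `Bᵀ (X q + t) = 0` for every column
`q` of `Q`. Since `B` has full row rank, `X q + t = 0` for every `q`. In terms of the rows
`Q₀, Q₁` of `Q` this reads `b Q₀ - a Q₁ = -t₀ 1`, `a Q₀ + b Q₁ = -t₁ 1`, `t₂ = 0`. Eliminating the
all-ones vector gives a linear relation between `Q₀` and `Q₁`; by independence of the rows its
coefficients vanish, and these amount to `(a² + b²) t₀ = (a² + b²) t₁ = 0`. If `a² + b² ≠ 0`, then
`t = 0`, and the first relation contradicts independence again. Hence `a = b = 0`, and then `t = 0`.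
-/

open Matrix Kronecker

/-- The 9×2 matrix `T` from the paper, with the `Fin 9` row index realized as
`Fin 3 × Fin 3` via column-major vectorization of 3×3 matrices: the row index
`(j, i)` corresponds to the 1-indexed vec entry `3*j + i + 1` (column `j`, row `i`).
Its first column is `e₂ - e₄` and its second column is `e₁ + e₅`. -/
def Tmat : Matrix (Fin 3 × Fin 3) (Fin 2) ℝ :=
  fun p c =>
    if c = 0 then
      (if p = ((0 : Fin 3), (1 : Fin 3)) then 1 else if p = ((1 : Fin 3), (0 : Fin 3)) then -1 else 0)
    else
      (if p = ((0 : Fin 3), (0 : Fin 3)) then 1 else if p = ((1 : Fin 3), (1 : Fin 3)) then 1 else 0)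

/-- The rows of a real matrix with three rows and rank `3` satisfy no nontrivial linear relation. -/
theorem eq_zero_of_rank_three {n : ℕ} (A : Matrix (Fin 3) (Fin n) ℝ) (hA : A.rank = 3)
    (v : Fin 3 → ℝ) (h : ∀ l, v 0 * A 0 l + v 1 * A 1 l + v 2 * A 2 l = 0) : v = 0 := by
  have hli : LinearIndependent ℝ A.row := by
    rw [linearIndependent_iff_card_eq_finrank_span, Set.finrank, ← A.rank_eq_finrank_span_row, hA]
    simp
  apply Matrix.vecMul_injective_iff.mpr hli
  ext l
  simpa [Matrix.vecMul, dotProduct, Fin.sum_univ_three] using h l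

/-- If `B` is a real `3 × m` matrix of rank 3 and `Q` a real `3 × N`
matrix of rank 3, then the block matrix `H = [ -2 (Qᵀ ⊗ Bᵀ) T , -2 (1_N ⊗ Bᵀ) ]`
has full column rank 5; equivalently, `(Qᵀ ⊗ Bᵀ)(T x) + (1_N ⊗ Bᵀ) t = 0`
implies `x = 0` and `t = 0`. -/
theorem stmt0_full_column_rank_H
    (m N : ℕ) (hm : 0 < m) (hN : 0 < N)
    (B : Matrix (Fin 3) (Fin m) ℝ) (Q : Matrix (Fin 3) (Fin N) ℝ)
    (hB : B.rank = 3) (hQ : Q.rank = 3) :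
    ∀ (x : Fin 2 → ℝ) (t : Fin 3 → ℝ),
      (Qᵀ ⊗ₖ Bᵀ) *ᵥ (Tmat *ᵥ x) +
        ((Matrix.of fun (_ : Fin N) (_ : Fin 1) => (1 : ℝ)) ⊗ₖ Bᵀ) *ᵥ
          (fun p : Fin 1 × Fin 3 => t p.2) = 0 →
      x = 0 ∧ t = 0 := by
  intro x t h
  have key : ∀ k, (![x 1 * Q 0 k - x 0 * Q 1 k + t 0,
      x 0 * Q 0 k + x 1 * Q 1 k + t 1, t 2] : Fin 3 → ℝ) = 0 := by
    intro k
    apply eq_zero_of_rank_three B hB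
    intro l
    have hkl := congrFun h (k, l)
    simp [Matrix.mulVec, dotProduct, Fintype.sum_prod_type, Fin.sum_univ_three, Tmat,
      -Matrix.mulVec_mulVec] at hkl
    simp
    linarith
  have e0 : ∀ k, x 1 * Q 0 k - x 0 * Q 1 k + t 0 = 0 := fun k => congrFun (key k) 0
  have e1 : ∀ k, x 0 * Q 0 k + x 1 * Q 1 k + t 1 = 0 := fun k => congrFun (key k) 1
  have e2 : t 2 = 0 := congrFun (key ⟨0, hN⟩) 2
  -- `t 1` times `e0` minus `t 0` times `e1` eliminates the constant terms.
  have hc := eq_zero_of_rank_three Q hQ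
    ![t 1 * x 1 - t 0 * x 0, -(t 1 * x 0) - t 0 * x 1, 0] (fun k => by
      simp
      linear_combination t 1 * e0 k - t 0 * e1 k)
  have c0 : t 1 * x 1 - t 0 * x 0 = 0 := congrFun hc 0
  have c1 : -(t 1 * x 0) - t 0 * x 1 = 0 := congrFun hc 1
  have hx : x 0 = 0 ∧ x 1 = 0 := by
    by_cases hs : x 0 ^ 2 + x 1 ^ 2 = 0
    · constructor <;> nlinarith [sq_nonneg (x 0), sq_nonneg (x 1)]
    · have t0 : t 0 = 0 := by
        apply (mul_eq_zero.mp _).resolve_left hs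
        linear_combination -x 0 * c0 - x 1 * c1
      have hd := eq_zero_of_rank_three Q hQ ![x 1, -x 0, 0] (fun k => by
        simp
        linear_combination e0 k - t0)
      have d0 : x 1 = 0 := congrFun hd 0
      have d1 : -x 0 = 0 := congrFun hd 1
      exact ⟨neg_eq_zero.mp d1, d0⟩
  obtain ⟨hx0, hx1⟩ := hx
  have t0 := e0 ⟨0, hN⟩
  have t1 := e1 ⟨0, hN⟩
  simp only [hx0, hx1, zero_mul, sub_zero, zero_add] at t0 t1
  constructor
  · ext i
    fin_cases i
    · exact hx0
    · exact hx1
  · ext i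
    fin_cases i
    · exact t0
    · exact t1
    · exact e2
end

section
/- For every nonzero vector v ∈ ℝ³, the 9×5 real matrix [ T , v ⊗ I₃ ] has full column rank 5; equivalently, for all x ∈ ℝ² and t ∈ ℝ³, T x + v ⊗ t = 0 implies x = 0 and t = 0. -/
/-! Read as a 3×3 matrix, `T x` has leading 2×2 block with diagonal entries `x 1` and off-diagonal
entries `x 0`, `-x 0`, hence minor `x 0 ^ 2 + x 1 ^ 2`. If `T x` equals the matrix
`-(v j * t i)` of rank at most one, this minor vanishes, so `x = 0`. Then `v j * t i = 0` for all
`j`, `i`, and a nonzero coordinate of `v` forces `t = 0`. -/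


open Matrix

/-- For every nonzero `v ∈ ℝ³`, the 9×5 matrix `[T, v ⊗ I₃]`
has full column rank 5; equivalently, `T x + (v ⊗ I₃) t = 0` implies `x = 0`
and `t = 0`.  Here `(v ⊗ I₃) t`, the 9-vector obtained by stacking
`v₁ I₃ t, v₂ I₃ t, v₃ I₃ t`, has entry `v j * t i` at row `(j, i)`. -/
theorem stmt1_T_and_v_kron_id_full_rank
    (v : Fin 3 → ℝ) (hv : v ≠ 0) :
    ∀ (x : Fin 2 → ℝ) (t : Fin 3 → ℝ),
      Tmat *ᵥ x + (fun p : Fin 3 × Fin 3 => v p.1 * t p.2) = 0 →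
      x = 0 ∧ t = 0 := by
  intro x t h
  have e : ∀ j i, (Tmat *ᵥ x) (j, i) + v j * t i = 0 := fun j i => congrFun h (j, i)
  have h00 := e 0 0
  have h01 := e 0 1
  have h10 := e 1 0
  have h11 := e 1 1
  simp [Tmat, Matrix.mulVec, dotProduct, Fin.sum_univ_two] at h00 h01 h10 h11
  -- the leading 2×2 minor of the rank-one matrix `(v j * t i)` vanishes
  have hsq : x 0 * x 0 + x 1 * x 1 = 0 := by
    linear_combination x 1 * h00 - v 0 * t 0 * h11 + x 0 * h01 + v 0 * t 1 * h10
  have hx0 : x 0 = 0 := by nlinarith [mul_self_nonneg (x 0), mul_self_nonneg (x 1)]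
  have hx1 : x 1 = 0 := by nlinarith [mul_self_nonneg (x 0), mul_self_nonneg (x 1)]
  have hx : x = 0 := by
    ext c
    fin_cases c
    · exact hx0
    · exact hx1
  refine ⟨hx, ?_⟩
  obtain ⟨j, hj⟩ := Function.ne_iff.mp hv
  ext i
  have hji := e j i
  rw [hx, Matrix.mulVec_zero, Pi.zero_apply, zero_add] at hji
  exact (mul_eq_zero.mp hji).resolve_left hj
end
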